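/- arXiv:hep-th/0301187 — 2 statements merged into one kernel-verified Lean document; each statement's English description precedes it below -/
import Mathlib

section
/- Let r₀ > 0, r₁ > r₀, and real constants c₀, 𝒬, μ. On (r₀, ∞) define g(r) = 1 − (r₀/r)¹², f(r) = (1 − (r₀/r)⁶)/(1 + (r₀/r)⁶), and 𝓗(r) = c₀ − (𝒬/(2r₀⁶))·log f(r) − (μ²/8)·∫_{r₁}^{r} s/g(s) ds. Then for all r > r₀, d/dr(r⁷ g(r) 𝓗′(r)) = −μ² r⁷; i.e. 𝓗 solves the curved transverse Laplace equation r^{−7}∂_r(r⁷g∂_r𝓗) = −μ². -/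
/-!
The radial equation prescribes the derivative of the flux `r ^ (n + 1) * g r * deriv H r`.
The logarithm contributes only the constant `-n * Q` to the flux, because `log f` has derivative
`2 * n * r₀ ^ n / (r ^ (n + 1) * g r)`. In the contribution of the integral the factor `g` cancels,
leaving `-μ ^ 2 / (n + 2) * r ^ (n + 2)`, whose derivative is the source.
-/

theorem hasDerivAt_intervalIntegral_of_continuousOn {E : Type*} [NormedAddCommGroup E]
    [NormedSpace ℝ E] [CompleteSpace E] {φ : ℝ → E} {U : Set ℝ} (hφ : ContinuousOn φ U)
    (hU : IsOpen U) [U.OrdConnected] {a x : ℝ} (ha : a ∈ U) (hx : x ∈ U) :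
    HasDerivAt (fun r => ∫ s in a..r, φ s) (φ x) x :=
  intervalIntegral.integral_hasDerivAt_right
    (hφ.mono (Set.OrdConnected.uIcc_subset ‹U.OrdConnected› ha hx)).intervalIntegrable
    (hφ.stronglyMeasurableAtFilter hU x hx) (hφ.continuousAt (hU.mem_nhds hx))

theorem hasDerivAt_log_one_sub_div_one_add {u : ℝ → ℝ} {u' x : ℝ} (hu : HasDerivAt u u' x)
    (hx : 1 - u x ^ 2 ≠ 0) :
    HasDerivAt (fun r => Real.log ((1 - u r) / (1 + u r))) (-2 * u' / (1 - u x ^ 2)) x := by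
  have hfactor : 1 - u x ^ 2 = (1 - u x) * (1 + u x) := by ring
  obtain ⟨hsub, hadd⟩ : 1 - u x ≠ 0 ∧ 1 + u x ≠ 0 := mul_ne_zero_iff.mp (hfactor ▸ hx)
  refine (((hu.const_sub 1).div (hu.const_add 1) hadd).log
    (div_ne_zero hsub hadd)).congr_deriv ?_
  rw [hfactor, Pi.div_apply]
  field_simp
  ring

theorem hasDerivAt_const_div_pow {𝕜 : Type*} [NontriviallyNormedField 𝕜] (a : 𝕜) (n : ℕ) {r : 𝕜}
    (hr : r ≠ 0) : HasDerivAt (fun s => (a / s) ^ n) (-n * a ^ n / r ^ (n + 1)) r := by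
  simp only [div_eq_mul_inv, mul_pow, inv_pow]
  refine (((hasDerivAt_pow n r).fun_inv (pow_ne_zero n hr)).const_mul (a ^ n)).congr_deriv ?_
  obtain _ | m := n
  · simp
  · rw [add_tsub_cancel_right]
    field_simp
    ring

theorem one_sub_div_pow_pos {K : Type*} [Field K] [LinearOrder K] [IsStrictOrderedRing K]
    {a r : K} {k : ℕ} (ha : 0 ≤ a) (har : a < r) (hk : k ≠ 0) : 0 < 1 - (a / r) ^ k :=
  have hr : 0 < r := ha.trans_lt har
  sub_pos.mpr <| pow_lt_one₀ (div_nonneg ha hr.le) ((div_lt_one hr).mpr har) hk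

theorem hasDerivAt_log_one_sub_div_pow_div_one_add {a r : ℝ} {n : ℕ} (hr : r ≠ 0)
    (hg : 1 - (a / r) ^ (2 * n) ≠ 0) :
    HasDerivAt (fun s => Real.log ((1 - (a / s) ^ n) / (1 + (a / s) ^ n)))
      (2 * n * a ^ n / (r ^ (n + 1) * (1 - (a / r) ^ (2 * n)))) r := by
  rw [pow_mul'] at hg ⊢
  refine (hasDerivAt_log_one_sub_div_one_add (hasDerivAt_const_div_pow a n hr) hg).congr_deriv ?_
  field_simp

theorem hasDerivAt_integral_div_one_sub_div_pow {a b r : ℝ} {k : ℕ} (ha : 0 ≤ a) (hab : a < b)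
    (har : a < r) (hk : k ≠ 0) :
    HasDerivAt (fun x => ∫ s in b..x, s / (1 - (a / s) ^ k)) (r / (1 - (a / r) ^ k)) r := by
  have hcont : ContinuousOn (fun s => s / (1 - (a / s) ^ k)) (Set.Ioi a) := by
    refine continuousOn_id.div
      (continuousOn_const.sub ((continuousOn_const.div continuousOn_id ?_).pow k)) ?_
    · exact fun s hs => (ha.trans_lt hs).ne'
    · exact fun s hs => (one_sub_div_pow_pos ha hs hk).ne'
  exact hasDerivAt_intervalIntegral_of_continuousOn hcont isOpen_Ioi hab har

theorem hasDerivAt_const_sub_log_sub_integral {n : ℕ} (hn : n ≠ 0) {a b r : ℝ} (ha : 0 < a)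
    (hab : a < b) (har : a < r) (c q M : ℝ) :
    HasDerivAt (fun x => c - q / (2 * a ^ n) * Real.log ((1 - (a / x) ^ n) / (1 + (a / x) ^ n))
        - M / (n + 2) * ∫ s in b..x, s / (1 - (a / s) ^ (2 * n)))
      ((-n * q - M / (n + 2) * r ^ (n + 2)) / (r ^ (n + 1) * (1 - (a / r) ^ (2 * n)))) r := by
  have hk : 2 * n ≠ 0 := mul_ne_zero two_ne_zero hn
  have hr : r ≠ 0 := (ha.trans har).ne'
  have hg : 1 - (a / r) ^ (2 * n) ≠ 0 := (one_sub_div_pow_pos ha.le har hk).ne'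
  have hlog := hasDerivAt_log_one_sub_div_pow_div_one_add hr hg
  have hint := hasDerivAt_integral_div_one_sub_div_pow ha.le hab har hk
  refine (((hlog.const_mul (q / (2 * a ^ n))).const_sub c).sub
    (hint.const_mul (M / (n + 2)))).congr_deriv ?_
  field_simp
  ring

theorem deriv_const_sub_div_mul_pow {𝕜 : Type*} [NontriviallyNormedField 𝕜] [CharZero 𝕜]
    (A B : 𝕜) {k : ℕ} (hk : k ≠ 0) (r : 𝕜) :
    deriv (fun s => A - B / k * s ^ k) r = -B * r ^ (k - 1) := by
  rw [(((hasDerivAt_pow k r).const_mul (B / k)).const_sub A).deriv]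
  field_simp

/-- The equation for transverse dimension `n + 2`; the case `n = 6` is `SO(8)`-invariant. -/
theorem stmt_9_general {n : ℕ} (hn : n ≠ 0) {r₀ r₁ : ℝ} (hr₀ : 0 < r₀) (hr₁ : r₀ < r₁)
    (c₀ Q μ : ℝ) {g f H : ℝ → ℝ} (hg : ∀ r, g r = 1 - (r₀ / r) ^ (2 * n))
    (hf : ∀ r, f r = (1 - (r₀ / r) ^ n) / (1 + (r₀ / r) ^ n))
    (hH : ∀ r, H r = c₀ - (Q / (2 * r₀ ^ n)) * Real.log (f r)
        - (μ ^ 2 / (n + 2)) * ∫ s in r₁..r, s / g s) {r : ℝ} (hr : r₀ < r) :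
    deriv (fun s => s ^ (n + 1) * g s * deriv H s) r = -μ ^ 2 * r ^ (n + 1) := by
  have hderiv : ∀ s, r₀ < s →
      HasDerivAt H ((-n * Q - μ ^ 2 / (n + 2) * s ^ (n + 2)) / (s ^ (n + 1) * g s)) s :=
    fun s hs => by
      simpa only [funext hH, hf, hg] using
        hasDerivAt_const_sub_log_sub_integral hn hr₀ hr₁ hs c₀ Q (μ ^ 2)
  have hflux : ∀ s, r₀ < s →
      s ^ (n + 1) * g s * deriv H s = -n * Q - μ ^ 2 / (n + 2 : ℕ) * s ^ (n + 2) :=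
    fun s hs => by
      have hs₀ : 0 < s := hr₀.trans hs
      have hgs : 0 < g s := hg s ▸ one_sub_div_pow_pos hr₀.le hs (mul_ne_zero two_ne_zero hn)
      rw [(hderiv s hs).deriv, mul_div_cancel₀ _ (by positivity)]
      norm_cast
  rw [(Filter.eventuallyEq_of_mem (Ioi_mem_nhds hr) hflux).deriv_eq]
  exact deriv_const_sub_div_mul_pow _ _ (by positivity) r

open intervalIntegral in
/-- For the SO(8)-invariant non-extremal deformation, the function
`𝓗(r) = c₀ − (𝒬/(2r₀⁶)) log f(r) − (μ²/8) ∫_{r₁}^r s/g(s) ds`, with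
`g(r) = 1 − (r₀/r)¹²` and `f(r) = (1 − (r₀/r)⁶)/(1 + (r₀/r)⁶)`, solves the
curved transverse Laplace equation `d/dr(r⁷ g 𝓗′) = −μ² r⁷` on `(r₀, ∞)`. -/
theorem stmt_9 (r₀ r₁ : ℝ) (hr₀ : 0 < r₀) (hr₁ : r₀ < r₁) (c₀ Q μ : ℝ)
    (g f H : ℝ → ℝ)
    (hg : ∀ r, g r = 1 - (r₀ / r) ^ 12)
    (hf : ∀ r, f r = (1 - (r₀ / r) ^ 6) / (1 + (r₀ / r) ^ 6))
    (hH : ∀ r, H r = c₀ - (Q / (2 * r₀ ^ 6)) * Real.log (f r)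
        - (μ ^ 2 / 8) * ∫ s in r₁..r, s / g s) :
    ∀ r, r₀ < r →
      deriv (fun s => s ^ 7 * g s * deriv H s) r = -μ ^ 2 * r ^ 7 := by
  intro r hr
  exact stmt_9_general (n := 6) (by norm_num) hr₀ hr₁ c₀ Q μ hg hf
    (fun r => (hH r).trans (by norm_num)) hr
end

section
/- Let μ, c₀, Q_w, Q₅ be real numbers and define, for r > 0 and \vec y = (y₁, y₂, y₃, y₄) ∈ ℝ⁴, the function 𝓗(r, \vec y) = c₀ + Q_w/r² − (μ²/16)(r² + |\vec y|² − 4Q₅ log r). Then 𝓗 satisfies ∂_r²𝓗 + (3/r)∂_r𝓗 + (1 + Q₅/r²)·Σ_{a=1}^4 ∂_{y_a}²𝓗 = −μ² for all r > 0 and all \vec y ∈ ℝ⁴. -/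
/-!
Let `d` be the number of overall-transverse directions and `n` the number of directions `y`.
The harmonic function `r ^ (2 - d)` drops out. As `□ r² = 2 d` and `□ log r = (d - 2) / r²`, while
the Laplacian of `|y|²` is the constant `2 n`, the logarithm is what cancels the term
`2 n Q / r²` produced by the factor `1 + Q / r²`, and the constant `2 (d + n)` remains.
For `d = n = 4` the cancellation fixes the coefficient `4 Q` of the logarithm, and
`2 (d + n) = 16` is the normalization in `μ² / 16`.
-/

section RadialLaplacian

/-- The Laplacian on `ℝ ^ d` of the radial function `x ↦ f ‖x‖`, at a point of norm `r > 0`. -/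
noncomputable def radialLaplacian (d : ℕ) (f : ℝ → ℝ) (r : ℝ) : ℝ :=
  deriv (deriv f) r + (d - 1) / r * deriv f r

variable (d : ℕ) {f g : ℝ → ℝ} {r : ℝ}

theorem radialLaplacian_const_add (c : ℝ) (f : ℝ → ℝ) (r : ℝ) :
    radialLaplacian d (fun s ↦ c + f s) r = radialLaplacian d f r := by
  simp only [radialLaplacian, deriv_const_add']

theorem radialLaplacian_const_mul (c : ℝ) (f : ℝ → ℝ) (r : ℝ) :
    radialLaplacian d (fun s ↦ c * f s) r = c * radialLaplacian d f r := by
  simp only [radialLaplacian, deriv_const_mul_field']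
  ring

theorem radialLaplacian_sub (hf : ContDiffAt ℝ 2 f r) (hg : ContDiffAt ℝ 2 g r) :
    radialLaplacian d (fun s ↦ f s - g s) r = radialLaplacian d f r - radialLaplacian d g r := by
  have first : deriv (fun s ↦ f s - g s) r = deriv f r - deriv g r :=
    deriv_fun_sub (hf.differentiableAt two_ne_zero) (hg.differentiableAt two_ne_zero)
  have second : deriv (deriv fun s ↦ f s - g s) r = deriv (deriv f) r - deriv (deriv g) r := by
    simpa only [iteratedDeriv_succ, iteratedDeriv_zero] using iteratedDeriv_fun_sub hf hg
  rw [radialLaplacian, first, second, radialLaplacian, radialLaplacian]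
  ring

theorem radialLaplacian_zpow (m : ℤ) (hr : r ≠ 0) :
    radialLaplacian d (fun s ↦ s ^ m) r = m * (m + d - 2) * r ^ (m - 2) := by
  have hpow : r ^ (m - 1) = r ^ (m - 2) * r := by
    rw [← zpow_add_one₀ hr]
    ring_nf
  simp only [radialLaplacian, deriv_zpow', deriv_const_mul_field', sub_sub, one_add_one_eq_two,
    Int.cast_sub, Int.cast_one, hpow]
  field_simp
  ring

theorem radialLaplacian_zpow_two_sub (hr : r ≠ 0) :
    radialLaplacian d (fun s ↦ s ^ (2 - d : ℤ)) r = 0 := by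
  simp [radialLaplacian_zpow d _ hr]

theorem radialLaplacian_sq (hr : r ≠ 0) : radialLaplacian d (fun s ↦ s ^ 2) r = 2 * d := by
  simpa using radialLaplacian_zpow d 2 hr

theorem radialLaplacian_log (hr : r ≠ 0) :
    radialLaplacian d Real.log r = (d - 2) / r ^ 2 := by
  simp only [radialLaplacian, Real.deriv_log', deriv_inv']
  field_simp
  ring

end RadialLaplacian

section CoordLaplacian

variable {ι : Type*} [Fintype ι] [DecidableEq ι]

/-- The Laplacian `∑ a, ∂² F / ∂ y_a²` on `ι → ℝ`, written with iterated partial derivatives. -/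
noncomputable def coordLaplacian (F : (ι → ℝ) → ℝ) (y : ι → ℝ) : ℝ :=
  ∑ a, deriv (deriv fun t ↦ F (Function.update y a t)) (y a)

theorem coordLaplacian_const_add (c : ℝ) (F : (ι → ℝ) → ℝ) (y : ι → ℝ) :
    coordLaplacian (fun z ↦ c + F z) y = coordLaplacian F y := by
  simp only [coordLaplacian, deriv_const_add']

theorem coordLaplacian_const_mul (c : ℝ) (F : (ι → ℝ) → ℝ) (y : ι → ℝ) :
    coordLaplacian (fun z ↦ c * F z) y = c * coordLaplacian F y := by
  simp only [coordLaplacian, deriv_const_mul_field', Finset.mul_sum]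

theorem coordLaplacian_sum_apply (g : ι → ℝ → ℝ) (y : ι → ℝ) :
    coordLaplacian (fun z ↦ ∑ b, g b (z b)) y = ∑ a, deriv (deriv (g a)) (y a) := by
  refine Finset.sum_congr rfl fun a _ ↦ ?_
  have split (t : ℝ) : ∑ b, g b (Function.update y a t b) = g a t + ∑ b ∈ {a}ᶜ, g b (y b) := by
    rw [Fintype.sum_eq_add_sum_compl a, Function.update_self]
    congr 1
    refine Finset.sum_congr rfl fun b hb ↦ ?_
    rw [Function.update_of_ne (by simpa using hb)]
  simp only [split, deriv_add_const']

theorem coordLaplacian_sum_sq (y : ι → ℝ) :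
    coordLaplacian (fun z ↦ ∑ a, z a ^ 2) y = 2 * Fintype.card ι := by
  have first : (deriv fun t : ℝ ↦ t ^ 2) = fun t ↦ 2 * t := by
    funext t
    simp
  rw [coordLaplacian_sum_apply fun _ t ↦ t ^ 2]
  simp [first, mul_comm]

end CoordLaplacian

section PlaneWave

variable {ι : Type*} [Fintype ι]

/-- The plane-wave function `𝓗` with `d` overall-transverse directions and directions `y` indexed
by `ι`. The strength of the source, `k`, and the coefficient of the logarithm, `b`, are left free:
the function of the D1-D5 system has `d = 4`, `k = μ² / 16` and `b = 4 Q₅`. -/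
noncomputable def planeWave (d : ℕ) (c q k b r : ℝ) (y : ι → ℝ) : ℝ :=
  c + q * r ^ (2 - d : ℤ) - k * (r ^ 2 + ∑ a, y a ^ 2 - b * Real.log r)

variable (d : ℕ) (c q k b : ℝ) {r : ℝ} (y : ι → ℝ)

theorem radialLaplacian_planeWave (hr : r ≠ 0) :
    radialLaplacian d (fun s ↦ planeWave d c q k b s y) r
      = -k * (2 * d - b * (d - 2) / r ^ 2) := by
  have hpow : ContDiffAt ℝ 2 (fun s : ℝ ↦ s ^ (2 - d : ℤ)) r :=
    (analyticAt_id.zpow hr).contDiffAt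
  have separate : (fun s ↦ planeWave d c q k b s y) = fun s ↦
      (c - k * ∑ a, y a ^ 2) + (q * s ^ (2 - d : ℤ) - k * (s ^ 2 - b * Real.log s)) := by
    funext s
    rw [planeWave]
    ring
  rw [separate, radialLaplacian_const_add,
    radialLaplacian_sub d (by fun_prop) (by fun_prop (disch := exact hr)),
    radialLaplacian_const_mul, radialLaplacian_zpow_two_sub d hr, radialLaplacian_const_mul,
    radialLaplacian_sub d (by fun_prop) (by fun_prop (disch := exact hr)), radialLaplacian_sq d hr,
    radialLaplacian_const_mul, radialLaplacian_log d hr]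
  ring

theorem coordLaplacian_planeWave [DecidableEq ι] (r : ℝ) :
    coordLaplacian (planeWave d c q k b r) y = -k * (2 * Fintype.card ι) := by
  have separate : planeWave d c q k b r = fun z : ι → ℝ ↦
      (c + q * r ^ (2 - d : ℤ) - k * (r ^ 2 - b * Real.log r)) + -k * ∑ a, z a ^ 2 := by
    funext z
    rw [planeWave]
    ring
  rw [separate, coordLaplacian_const_add, coordLaplacian_const_mul, coordLaplacian_sum_sq]

theorem stmt_12_general [DecidableEq ι] {Q : ℝ} (hb : b * (d - 2) = 2 * Fintype.card ι * Q)
    (hr : 0 < r) :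
    radialLaplacian d (fun s ↦ planeWave d c q k b s y) r
        + (1 + Q / r ^ 2) * coordLaplacian (planeWave d c q k b r) y
      = -(2 * (d + Fintype.card ι) * k) := by
  rw [radialLaplacian_planeWave d c q k b y hr.ne', coordLaplacian_planeWave, hb]
  ring

end PlaneWave

/-- The plane-wave function for the 𝓗-deformed extremal D1-D5 system:
`𝓗(r, y) = c₀ + Q_w/r² − (μ²/16)(r² + |y|² − 4Q₅ log r)` (with `y ∈ ℝ⁴`) satisfies
`∂_r²𝓗 + (3/r)∂_r𝓗 + (1 + Q₅/r²)·Σ_a ∂_{y_a}²𝓗 = −μ²` for all `r > 0`, `y ∈ ℝ⁴`. -/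
theorem stmt_12 (μ c₀ Qw Q₅ : ℝ) (H : ℝ → (Fin 4 → ℝ) → ℝ)
    (hH : ∀ r y, H r y
        = c₀ + Qw / r ^ 2
          - (μ ^ 2 / 16) * (r ^ 2 + (∑ a, (y a) ^ 2) - 4 * Q₅ * Real.log r)) :
    ∀ (r : ℝ) (y : Fin 4 → ℝ), 0 < r →
      deriv (deriv (fun s => H s y)) r + (3 / r) * deriv (fun s => H s y) r
        + (1 + Q₅ / r ^ 2) *
            (∑ a, deriv (deriv (fun t => H r (Function.update y a t))) (y a))
        = -μ ^ 2 := by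
  intro r y hr
  obtain rfl : H = planeWave 4 c₀ Qw (μ ^ 2 / 16) (4 * Q₅) := by
    funext s z
    have inv_sq : s ^ (2 - (4 : ℕ) : ℤ) = (s ^ 2)⁻¹ := rfl
    rw [hH, planeWave, inv_sq, div_eq_mul_inv Qw]
  have wave := stmt_12_general 4 c₀ Qw (μ ^ 2 / 16) (4 * Q₅) y (Q := Q₅)
    (by norm_num [Fintype.card_fin]; ring) hr
  rw [radialLaplacian, coordLaplacian] at wave
  convert wave using 1 <;> norm_num [Fintype.card_fin]
  ring
end
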